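/- Every self-similar arc γ in ℝ^d with Hausdorff dimension dim_H γ > 1 is a Whitney set. (No open set condition is assumed.) -/

import Mathlib

open Set MeasureTheory

noncomputable section

/-- An arc in `ℝ^d`: a subset homeomorphic to `[0,1]`, realized as the image of a
continuous injection of `[0,1]` (automatically a homeomorphism onto its image). -/
def IsArc {d : ℕ} (γ : Set (EuclideanSpace ℝ (Fin d))) : Prop :=
  ∃ h : ℝ → EuclideanSpace ℝ (Fin d), ContinuousOn h (Set.Icc 0 1) ∧
    Set.InjOn h (Set.Icc 0 1) ∧ h '' Set.Icc 0 1 = γ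

/-- A compact connected set `E ⊆ ℝ^d` is a Whitney set if there is a `C¹` function
`f : ℝ^d → ℝ` whose derivative vanishes on `E` but which is not constant on `E`. -/
def IsWhitneySet {d : ℕ} (E : Set (EuclideanSpace ℝ (Fin d))) : Prop :=
  IsCompact E ∧ IsConnected E ∧
    ∃ f : EuclideanSpace ℝ (Fin d) → ℝ,
      ContDiff ℝ 1 f ∧ (∀ x ∈ E, fderiv ℝ f x = 0) ∧
        ¬ ∀ x ∈ E, ∀ y ∈ E, f x = f y

/-!
Since `dimH γ > 1`, the ratios satisfy `∑ ρ i > 1`, and hence `∑ ρ w` over the words `w` of length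
`n` tends to infinity with `n`. As every end of the arc lies in at most one piece of each level, we
may pass to words whose pieces miss both ends and still have `S = ∑ ρ i > 1`.

Along such an arc one builds a devil's staircase `f`, from `0` to `1`, which is locally constant
between the pieces and equals `c i * f ∘ (φ i)⁻¹` plus a constant near the piece `φ i '' γ`, where
`|c i| = ρ i / S`. As `(φ i)⁻¹` expands by `(ρ i)⁻¹`, passing to a piece multiplies the derivative
by at most `S⁻¹ < 1`. Hence the series which solves the functional equation converges in `C¹`, and
the maximum of `‖f'‖` on `γ` is at most `S⁻¹` times itself, so that it vanishes.

The sign of `c i` accounts for the pieces on which `φ i` reverses the arc. In place of an open set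
condition, the functional equation is imposed near proper subarcs of the pieces, which are disjoint
since the pieces meet in at most one point.
-/

section

open Filter Function Topology
open scoped NNReal ENNReal

section Words

variable {X ι : Type*} {φ : ι → X → X}

/-- The composition `φ (w 0) ∘ ⋯ ∘ φ (w (n - 1))` along a word `w` of length `n`; the empty word
gives the identity. -/
def wordMap (φ : ι → X → X) : (n : ℕ) → (Fin n → ι) → X → X
  | 0, _ => id
  | n + 1, w => φ (w 0) ∘ wordMap φ n (Fin.tail w)

lemma image_wordMap_succ {n : ℕ} (w : Fin (n + 1) → ι) (s : Set X) :
    wordMap φ (n + 1) w '' s = φ (w 0) '' (wordMap φ n (Fin.tail w) '' s) :=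
  image_comp _ _ s

lemma lipschitzWith_wordMap [PseudoEMetricSpace X] {K : ι → ℝ≥0}
    (hφ : ∀ i, LipschitzWith (K i) (φ i)) :
    ∀ (n : ℕ) (w : Fin n → ι), LipschitzWith (∏ j, K (w j)) (wordMap φ n w)
  | 0, _ => by simpa only [wordMap, Finset.univ_eq_empty, Finset.prod_empty] using LipschitzWith.id
  | n + 1, w => by
    rw [Fin.prod_univ_succ]
    exact (hφ (w 0)).comp (lipschitzWith_wordMap hφ n (Fin.tail w))

lemma subset_iUnion_image_wordMap {γ : Set X} (hγ : γ ⊆ ⋃ i, φ i '' γ) :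
    ∀ n : ℕ, γ ⊆ ⋃ w : Fin n → ι, wordMap φ n w '' γ
  | 0 => fun x hx => mem_iUnion.2 ⟨Fin.elim0, x, hx, rfl⟩
  | n + 1 => fun x hx => by
    obtain ⟨i, y, hy, rfl⟩ := mem_iUnion.1 (hγ hx)
    obtain ⟨w, z, hz, rfl⟩ := mem_iUnion.1 (subset_iUnion_image_wordMap hγ n hy)
    exact mem_iUnion.2 ⟨Fin.cons i w, z, hz, by simp only [wordMap, Fin.cons_zero, Fin.tail_cons,
      Function.comp_apply]⟩

lemma sum_ediam_image_wordMap_rpow_le [PseudoEMetricSpace X] [Fintype ι] {K : ι → ℝ≥0}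
    (hφ : ∀ i, LipschitzWith (K i) (φ i)) {s : ℝ≥0} (hs : ∑ i, K i ^ (s : ℝ) ≤ 1) (γ : Set X)
    (n : ℕ) :
    ∑ w : Fin n → ι, Metric.ediam (wordMap φ n w '' γ) ^ (s : ℝ) ≤ Metric.ediam γ ^ (s : ℝ) :=
  calc ∑ w : Fin n → ι, Metric.ediam (wordMap φ n w '' γ) ^ (s : ℝ)
      ≤ ∑ w : Fin n → ι, ((∏ j, K (w j) : ℝ≥0) * Metric.ediam γ) ^ (s : ℝ) := by
        gcongr with w
        exact (lipschitzWith_wordMap hφ n w).ediam_image_le γ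
    _ = ((∑ i, K i ^ (s : ℝ)) ^ n : ℝ≥0) * Metric.ediam γ ^ (s : ℝ) := by
        simp only [ENNReal.mul_rpow_of_nonneg _ _ s.coe_nonneg, ← Finset.sum_mul,
          ← ENNReal.coe_rpow_of_nonneg _ s.coe_nonneg, ← NNReal.finsetProd_rpow,
          Fintype.sum_pow, ENNReal.ofNNReal_finsetSum]
    _ ≤ Metric.ediam γ ^ (s : ℝ) :=
        mul_le_of_le_one_left zero_le (ENNReal.coe_le_one_iff.2 (pow_le_one₀ zero_le hs))

theorem dimH_le_of_subset_iUnion_image {X ι : Type*} [EMetricSpace X] [Fintype ι]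
    {φ : ι → X → X} {K : ι → ℝ≥0} (hφ : ∀ i, LipschitzWith (K i) (φ i)) (hK : ∀ i, K i < 1)
    {γ : Set X} (hdiam : Metric.ediam γ ≠ ⊤) (hγ : γ ⊆ ⋃ i, φ i '' γ) {s : ℝ≥0}
    (hs : ∑ i, K i ^ (s : ℝ) ≤ 1) : dimH γ ≤ s := by
  borelize X
  set r : ℝ≥0 := Finset.univ.sup K
  have hr : r < 1 := (Finset.sup_lt_iff zero_lt_one).2 fun i _ => hK i
  have hratio (n : ℕ) (w : Fin n → ι) : ∏ j, K (w j) ≤ r ^ n := by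
    simpa only [Finset.card_univ, Fintype.card_fin] using
      Finset.prod_le_pow_card Finset.univ (fun j => K (w j)) r fun j _ =>
        Finset.le_sup (f := K) (Finset.mem_univ (w j))
  have hpiece (n : ℕ) (w : Fin n → ι) :
      Metric.ediam (wordMap φ n w '' γ) ≤ (r ^ n : ℝ≥0) * Metric.ediam γ :=
    ((lipschitzWith_wordMap hφ n w).weaken (hratio n w)).ediam_image_le γ
  have hsmall : Tendsto (fun n : ℕ => ((r ^ n : ℝ≥0) : ℝ≥0∞) * Metric.ediam γ) atTop (𝓝 0) := by
    have : Tendsto (fun n : ℕ => ((r ^ n : ℝ≥0) : ℝ≥0∞)) atTop (𝓝 0) :=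
      ENNReal.tendsto_coe.2 (tendsto_pow_atTop_nhds_zero_of_lt_one zero_le hr)
    simpa only [zero_mul] using ENNReal.Tendsto.mul_const this (Or.inr hdiam)
  have hmeasure : μH[s] γ ≤ Metric.ediam γ ^ (s : ℝ) :=
    calc μH[s] γ
        ≤ liminf (fun n => ∑ w : Fin n → ι, Metric.ediam (wordMap φ n w '' γ) ^ (s : ℝ)) atTop :=
          Measure.hausdorffMeasure_le_liminf_sum s γ _ hsmall _
            (Eventually.of_forall hpiece) (Eventually.of_forall (subset_iUnion_image_wordMap hγ))
      _ ≤ liminf (fun _ : ℕ => Metric.ediam γ ^ (s : ℝ)) atTop :=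
          liminf_le_liminf (Eventually.of_forall (sum_ediam_image_wordMap_rpow_le hφ hs γ))
      _ = Metric.ediam γ ^ (s : ℝ) := liminf_const _
  exact dimH_le_of_hausdorffMeasure_ne_top
    (ne_top_of_le_ne_top (ENNReal.rpow_ne_top_of_nonneg s.coe_nonneg hdiam) hmeasure)

end Words

/-- A family of similitudes `φ i` of ratio `ρ i` that map `γ` into itself, any two of the images
`φ i '' γ` having at most one common point. The images need not cover `γ`, and the ratio `1` is
admitted because it is that of the empty word. -/
structure SimilitudeSystem {X ι : Type*} [MetricSpace X] (γ : Set X) (φ : ι → X → X)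
    (ρ : ι → ℝ) : Prop where
  ratio_mem : ∀ i, ρ i ∈ Ioc 0 1
  dist_eq : ∀ i x y, dist (φ i x) (φ i y) = ρ i * dist x y
  mapsTo : ∀ i, MapsTo (φ i) γ γ
  overlap : Pairwise fun i j => (φ i '' γ ∩ φ j '' γ).Subsingleton

namespace SimilitudeSystem

variable {X ι κ : Type*} [MetricSpace X] {γ : Set X} {φ : ι → X → X} {ρ : ι → ℝ}

lemma injective (F : SimilitudeSystem γ φ ρ) (i : ι) : Function.Injective (φ i) := fun x y hxy => by
  have h := F.dist_eq i x y
  rw [hxy, dist_self, zero_eq_mul] at h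
  exact dist_eq_zero.1 (h.resolve_left (F.ratio_mem i).1.ne')

lemma lipschitzWith (F : SimilitudeSystem γ φ ρ) (i : ι) : LipschitzWith 1 (φ i) :=
  LipschitzWith.of_dist_le_mul fun x y => by
    rw [F.dist_eq]
    exact mul_le_mul_of_nonneg_right (F.ratio_mem i).2 dist_nonneg

lemma comp_injective (F : SimilitudeSystem γ φ ρ) {f : κ → ι} (hf : Function.Injective f) :
    SimilitudeSystem γ (fun k => φ (f k)) (fun k => ρ (f k)) where
  ratio_mem k := F.ratio_mem (f k)
  dist_eq k := F.dist_eq (f k)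
  mapsTo k := F.mapsTo (f k)
  overlap _ _ hkl := F.overlap (hf.ne hkl)

lemma mapsTo_wordMap (F : SimilitudeSystem γ φ ρ) :
    ∀ (n : ℕ) (w : Fin n → ι), MapsTo (wordMap φ n w) γ γ
  | 0, _ => mapsTo_id γ
  | n + 1, w => (F.mapsTo (w 0)).comp (F.mapsTo_wordMap n (Fin.tail w))

lemma dist_wordMap (F : SimilitudeSystem γ φ ρ) (x y : X) :
    ∀ (n : ℕ) (w : Fin n → ι),
      dist (wordMap φ n w x) (wordMap φ n w y) = (∏ j, ρ (w j)) * dist x y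
  | 0, _ => by simp only [wordMap, id, Finset.univ_eq_empty, Finset.prod_empty, one_mul]
  | n + 1, w => by
    rw [Fin.prod_univ_succ, mul_assoc]
    exact (F.dist_eq _ _ _).trans (congrArg _ (F.dist_wordMap x y n (Fin.tail w)))

lemma overlap_wordMap (F : SimilitudeSystem γ φ ρ) :
    ∀ n : ℕ, Pairwise fun v w : Fin n → ι => (wordMap φ n v '' γ ∩ wordMap φ n w '' γ).Subsingleton
  | 0 => fun v w hvw => absurd (Subsingleton.elim v w) hvw
  | n + 1 => fun v w hvw => by
    simp only [image_wordMap_succ]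
    by_cases h0 : v 0 = w 0
    · have htail : Fin.tail v ≠ Fin.tail w := fun h => hvw <| by
        rw [← Fin.cons_self_tail v, ← Fin.cons_self_tail w, h0, h]
      rw [h0, ← image_inter (F.injective (w 0))]
      exact Subsingleton.image (F.overlap_wordMap n htail) _
    · exact Subsingleton.anti (F.overlap h0) (inter_subset_inter
        (image_mono (F.mapsTo_wordMap n _).image_subset)
        (image_mono (F.mapsTo_wordMap n _).image_subset))

lemma words (F : SimilitudeSystem γ φ ρ) (n : ℕ) :
    SimilitudeSystem γ (wordMap φ n) (fun w => ∏ j, ρ (w j)) where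
  ratio_mem w := ⟨Finset.prod_pos fun j _ => (F.ratio_mem (w j)).1,
    Finset.prod_le_one (fun j _ => (F.ratio_mem (w j)).1.le) fun j _ => (F.ratio_mem (w j)).2⟩
  dist_eq w x y := F.dist_wordMap x y n w
  mapsTo := F.mapsTo_wordMap n
  overlap := F.overlap_wordMap n

end SimilitudeSystem

lemma one_lt_sum_of_one_lt_dimH {X ι : Type*} [MetricSpace X] [Fintype ι] {φ : ι → X → X}
    {ρ : ι → ℝ} (hρ : ∀ i, ρ i ∈ Ico 0 1) (hφ : ∀ i x y, dist (φ i x) (φ i y) ≤ ρ i * dist x y)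
    {γ : Set X} (hbdd : Bornology.IsBounded γ) (hγ : γ ⊆ ⋃ i, φ i '' γ) (hdim : 1 < dimH γ) :
    1 < ∑ i, ρ i := by
  by_contra! hsum
  lift ρ to ι → ℝ≥0 using fun i => (hρ i).1
  have hsum' : ∑ i, ρ i ≤ 1 := NNReal.coe_le_coe.1 (by push_cast; exact hsum)
  have hle : dimH γ ≤ (1 : ℝ≥0) :=
    dimH_le_of_subset_iUnion_image (fun i => LipschitzWith.of_dist_le_mul (hφ i))
      (fun i => (hρ i).2) hbdd.ediam_ne_top hγ
      (by simpa only [NNReal.coe_one, NNReal.rpow_one] using hsum')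
  exact hdim.not_ge hle

section Calculus

variable {E : Type*} [NormedAddCommGroup E] [NormedSpace ℝ E]

lemma exists_contDiff_inverse_of_dist_eq [FiniteDimensional ℝ E] [StrictConvexSpace ℝ E]
    {φ : E → E} {r : ℝ} (hr : 0 < r) (hφ : ∀ x y, dist (φ x) (φ y) = r * dist x y)
    {n : WithTop ℕ∞} :
    ∃ ψ : E → E, ContDiff ℝ n ψ ∧ LeftInverse ψ φ ∧ RightInverse ψ φ ∧
      ∀ x, ‖fderiv ℝ ψ x‖ ≤ r⁻¹ := by
  have hiso : Isometry fun x => r⁻¹ • φ x := Isometry.of_dist_eq fun x y => by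
    rw [dist_smul₀, hφ, Real.norm_of_nonneg (inv_nonneg.2 hr.le), inv_mul_cancel_left₀ hr.ne']
  let _ : Inhabited E := ⟨0⟩
  let e : E ≃ᵃⁱ[ℝ] E := hiso.affineIsometryOfStrictConvexSpace.toAffineIsometryEquiv rfl
  have he (x : E) : e x = r⁻¹ • φ x := rfl
  have hlip : LipschitzWith (Real.toNNReal r⁻¹) fun x => e.symm (r⁻¹ • x) :=
    LipschitzWith.of_dist_le_mul fun x y => by
      rw [e.symm.dist_map, dist_smul₀, Real.norm_of_nonneg (inv_nonneg.2 hr.le),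
        Real.coe_toNNReal _ (inv_nonneg.2 hr.le)]
  refine ⟨fun x => e.symm (r⁻¹ • x), ?_, fun x => ?_, fun x => ?_, fun x => ?_⟩
  · exact e.symm.toAffineIsometry.toContinuousAffineMap.contDiff.comp (contDiff_const_smul _)
  · simp only [← he, e.symm_apply_apply]
  · refine smul_right_injective E (inv_ne_zero hr.ne') ?_
    simp only [← he, e.apply_symm_apply]
  · simpa only [Real.coe_toNNReal _ (inv_nonneg.2 hr.le)] using
      norm_fderiv_le_of_lipschitz ℝ hlip (x₀ := x)

lemma exists_contDiff_step [FiniteDimensional ℝ E] {s t : Set E} (hs : IsClosed s)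
    (ht : IsClosed t) (hst : Disjoint s t) :
    ∃ f : E → ℝ, ContDiff ℝ 1 f ∧ (∀ x ∈ s, f x = 0 ∧ fderiv ℝ f x = 0) ∧
      ∀ x ∈ t, f x = 1 ∧ fderiv ℝ f x = 0 := by
  obtain ⟨f, h0, h1, -⟩ := exists_contMDiffMap_zero_one_nhds_of_isClosed (n := 1)
    (modelWithCornersSelf ℝ E) hs ht hst
  have heq {x : E} {a : ℝ} (hx : ∀ᶠ y in 𝓝 x, f y = a) : f x = a ∧ fderiv ℝ f x = 0 :=
    ⟨hx.self_of_nhds, (EventuallyEq.fderiv_eq hx).trans (fderiv_const_apply a)⟩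
  exact ⟨f, f.contMDiff.contDiff, fun x hx => heq (eventually_nhdsSet_iff_forall.1 h0 x hx),
    fun x hx => heq (eventually_nhdsSet_iff_forall.1 h1 x hx)⟩

lemma fderiv_eq_zero_of_notMem {K : Set E} (hK : IsClosed K) {f : E → ℝ}
    (hf : ∀ x ∉ K, f x = 0) {x : E} (hx : x ∉ K) : fderiv ℝ f x = 0 :=
  (EventuallyEq.fderiv_eq (eventually_of_mem (hK.isOpen_compl.mem_nhds hx) hf)).trans
    (fderiv_const_apply 0)

end Calculus

lemma norm_sum_le_of_pairwise_eq_zero {ι V : Type*} [Fintype ι] [SeminormedAddCommGroup V]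
    {v : ι → V} {B : ℝ} (hB : 0 ≤ B) (hv : Pairwise fun i j => v i ≠ 0 → v j = 0)
    (hle : ∀ i, ‖v i‖ ≤ B) : ‖∑ i, v i‖ ≤ B := by
  by_cases h : ∃ i, v i ≠ 0
  · obtain ⟨i, hi⟩ := h
    rw [Fintype.sum_eq_single i fun j hj => hv hj.symm hi]
    exact hle i
  · push Not at h
    simpa only [h, Finset.sum_const_zero, norm_zero] using hB

section WeightedComp

variable {E ι : Type*} [Fintype ι] {ψ : ι → E → E} {c : ι → ℝ}

/-- The transfer operator `H ↦ ∑ i, c i • (H ∘ ψ i)` attached to the inverse branches `ψ i`. -/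
def weightedComp (c : ι → ℝ) (ψ : ι → E → E) (H : E → ℝ) (x : E) : ℝ :=
  ∑ i, c i * H (ψ i x)

lemma weightedComp_eq_zero {K : Set E} (hsub : ∀ i, ψ i ⁻¹' K ⊆ K) {H : E → ℝ}
    (hH : ∀ x ∉ K, H x = 0) {x : E} (hx : x ∉ K) : weightedComp c ψ H x = 0 :=
  Finset.sum_eq_zero fun i _ => by rw [hH _ fun h => hx (hsub i h), mul_zero]

lemma abs_weightedComp_le {K : Set E} (hdisj : Pairwise (Disjoint on fun i => ψ i ⁻¹' K))
    {θ : ℝ} (hc : ∀ i, |c i| ≤ θ) {H : E → ℝ} (hH : ∀ x ∉ K, H x = 0) {B : ℝ}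
    (hB : ∀ x, |H x| ≤ B) (hθ : 0 ≤ θ) (x : E) : |weightedComp c ψ H x| ≤ θ * B := by
  have hB0 : 0 ≤ B := (abs_nonneg _).trans (hB x)
  refine norm_sum_le_of_pairwise_eq_zero (v := fun i => c i * H (ψ i x)) (mul_nonneg hθ hB0)
    (fun i j hij hi => ?_) fun i => ?_
  · have hiK : ψ i x ∈ K := not_not.1 fun h => hi (by rw [hH _ h, mul_zero])
    rw [hH _ (disjoint_left.1 (hdisj hij) hiK), mul_zero]
  · rw [norm_mul]
    exact mul_le_mul (hc i) (hB _) (abs_nonneg _) hθ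

lemma iterate_weightedComp_eq_zero {K : Set E} (hsub : ∀ i, ψ i ⁻¹' K ⊆ K) {D : E → ℝ}
    (hD : ∀ x ∉ K, D x = 0) : ∀ m : ℕ, ∀ x ∉ K, (weightedComp c ψ)^[m] D x = 0
  | 0 => hD
  | m + 1 => by
    rw [iterate_succ_apply']
    exact fun x hx => weightedComp_eq_zero hsub (iterate_weightedComp_eq_zero hsub hD m) hx

lemma abs_iterate_weightedComp_le {K : Set E} (hsub : ∀ i, ψ i ⁻¹' K ⊆ K)
    (hdisj : Pairwise (Disjoint on fun i => ψ i ⁻¹' K)) {θ : ℝ} (hθ : 0 ≤ θ)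
    (hc : ∀ i, |c i| ≤ θ) {D : E → ℝ} (hDK : ∀ x ∉ K, D x = 0) {B : ℝ} (hB : ∀ x, |D x| ≤ B) :
    ∀ (m : ℕ) (x : E), |(weightedComp c ψ)^[m] D x| ≤ θ ^ m * B
  | 0 => by simpa only [iterate_zero_apply, pow_zero, one_mul] using hB
  | m + 1 => by
    rw [iterate_succ_apply', pow_succ', mul_assoc]
    exact abs_weightedComp_le hdisj hc (iterate_weightedComp_eq_zero hsub hDK m)
      (abs_iterate_weightedComp_le hsub hdisj hθ hc hDK hB m) hθ

variable [NormedAddCommGroup E] [NormedSpace ℝ E]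

lemma contDiff_weightedComp {n : WithTop ℕ∞} (hψ : ∀ i, ContDiff ℝ n (ψ i)) {H : E → ℝ}
    (hH : ContDiff ℝ n H) : ContDiff ℝ n (weightedComp c ψ H) :=
  ContDiff.sum fun i _ => contDiff_const.mul (hH.comp (hψ i))

lemma fderiv_weightedComp (hψ : ∀ i, Differentiable ℝ (ψ i)) {H : E → ℝ}
    (hH : Differentiable ℝ H) (x : E) :
    fderiv ℝ (weightedComp c ψ H) x =
      ∑ i, c i • (fderiv ℝ H (ψ i x)).comp (fderiv ℝ (ψ i) x) :=
  (HasFDerivAt.fun_sum fun i _ =>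
    ((hH (ψ i x)).hasFDerivAt.comp x (hψ i x).hasFDerivAt).const_mul (c i)).fderiv

lemma norm_fderiv_weightedComp_le {K : Set E}
    (hdisj : Pairwise (Disjoint on fun i => ψ i ⁻¹' K)) (hψ : ∀ i, Differentiable ℝ (ψ i))
    {θ : ℝ} (hc : ∀ i x, |c i| * ‖fderiv ℝ (ψ i) x‖ ≤ θ) {H : E → ℝ} (hH : Differentiable ℝ H)
    (hH' : ∀ x ∉ K, fderiv ℝ H x = 0) {B : ℝ} (hB : ∀ x, ‖fderiv ℝ H x‖ ≤ B) (hθ : 0 ≤ θ)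
    (x : E) : ‖fderiv ℝ (weightedComp c ψ H) x‖ ≤ θ * B := by
  have hB0 : 0 ≤ B := (norm_nonneg _).trans (hB x)
  rw [fderiv_weightedComp hψ hH]
  refine norm_sum_le_of_pairwise_eq_zero (mul_nonneg hθ hB0) (fun i j hij hi => ?_) fun i => ?_
  · have hiK : ψ i x ∈ K := not_not.1 fun h => hi (by
      rw [hH' _ h, ContinuousLinearMap.zero_comp, smul_zero])
    rw [hH' _ (disjoint_left.1 (hdisj hij) hiK), ContinuousLinearMap.zero_comp, smul_zero]
  · calc ‖c i • (fderiv ℝ H (ψ i x)).comp (fderiv ℝ (ψ i) x)‖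
        ≤ |c i| * (B * ‖fderiv ℝ (ψ i) x‖) := by
          rw [norm_smul, Real.norm_eq_abs]
          gcongr
          exact (ContinuousLinearMap.opNorm_comp_le _ _).trans (by gcongr; exact hB _)
      _ = |c i| * ‖fderiv ℝ (ψ i) x‖ * B := by ring
      _ ≤ θ * B := by gcongr; exact hc i x

lemma contDiff_iterate_weightedComp {n : WithTop ℕ∞} (hψ : ∀ i, ContDiff ℝ n (ψ i))
    {D : E → ℝ} (hD : ContDiff ℝ n D) : ∀ m : ℕ, ContDiff ℝ n ((weightedComp c ψ)^[m] D)
  | 0 => hD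
  | m + 1 => by
    rw [iterate_succ_apply']
    exact contDiff_weightedComp hψ (contDiff_iterate_weightedComp hψ hD m)

lemma norm_fderiv_iterate_weightedComp_le {K : Set E} (hK : IsClosed K)
    (hsub : ∀ i, ψ i ⁻¹' K ⊆ K) (hdisj : Pairwise (Disjoint on fun i => ψ i ⁻¹' K))
    (hψ : ∀ i, ContDiff ℝ 1 (ψ i)) {θ : ℝ} (hθ : 0 ≤ θ)
    (hc : ∀ i x, |c i| * ‖fderiv ℝ (ψ i) x‖ ≤ θ) {D : E → ℝ} (hD : ContDiff ℝ 1 D)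
    (hDK : ∀ x ∉ K, D x = 0) {B : ℝ} (hB : ∀ x, ‖fderiv ℝ D x‖ ≤ B) :
    ∀ (m : ℕ) (x : E), ‖fderiv ℝ ((weightedComp c ψ)^[m] D) x‖ ≤ θ ^ m * B
  | 0 => by simpa only [iterate_zero_apply, pow_zero, one_mul] using hB
  | m + 1 => by
    rw [iterate_succ_apply', pow_succ', mul_assoc]
    exact norm_fderiv_weightedComp_le hdisj (fun i => (hψ i).differentiable one_ne_zero) hc
      ((contDiff_iterate_weightedComp hψ hD m).differentiable one_ne_zero)
      (fun x hx => fderiv_eq_zero_of_notMem hK (iterate_weightedComp_eq_zero hsub hDK m) hx)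
      (norm_fderiv_iterate_weightedComp_le hK hsub hdisj hψ hθ hc hD hDK hB m) hθ

theorem exists_contDiff_eq_add_weightedComp {K : Set E} (hK : IsClosed K)
    (hsub : ∀ i, ψ i ⁻¹' K ⊆ K) (hdisj : Pairwise (Disjoint on fun i => ψ i ⁻¹' K))
    (hψ : ∀ i, ContDiff ℝ 1 (ψ i)) {θ : ℝ} (hθ0 : 0 ≤ θ) (hθ1 : θ < 1) (hc : ∀ i, |c i| ≤ θ)
    (hc' : ∀ i x, |c i| * ‖fderiv ℝ (ψ i) x‖ ≤ θ) {D : E → ℝ} (hD : ContDiff ℝ 1 D)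
    (hDc : HasCompactSupport D) (hDK : ∀ x ∉ K, D x = 0) :
    ∃ H : E → ℝ, ContDiff ℝ 1 H ∧ (∀ x ∉ K, H x = 0) ∧
      ∀ x, H x = D x + weightedComp c ψ H x := by
  obtain ⟨B, hB⟩ := hDc.exists_bound_of_continuous hD.continuous
  obtain ⟨B', hB'⟩ := (hDc.fderiv ℝ).exists_bound_of_continuous (hD.continuous_fderiv one_ne_zero)
  set L : ℕ → E → ℝ := fun n => (weightedComp c ψ)^[n] D
  have hbound (n : ℕ) (x : E) : ‖L n x‖ ≤ θ ^ n * B :=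
    abs_iterate_weightedComp_le hsub hdisj hθ0 hc hDK hB n x
  have hbound' (n : ℕ) (x : E) : ‖fderiv ℝ (L n) x‖ ≤ θ ^ n * B' :=
    norm_fderiv_iterate_weightedComp_le hK hsub hdisj hψ hθ0 hc' hD hDK hB' n x
  have hgeom (C : ℝ) : Summable fun n => θ ^ n * C :=
    (summable_geometric_of_lt_one hθ0 hθ1).mul_right C
  have hsum (x : E) : Summable fun n => L n x := (hgeom B).of_norm_bounded fun n => hbound n x
  refine ⟨fun x => ∑' n, L n x, ?_, fun x hx => ?_, fun x => ?_⟩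
  · refine contDiff_tsum (N := 1) (v := fun k n => θ ^ n * if k = 0 then B else B')
      (contDiff_iterate_weightedComp hψ hD) (fun k _ => hgeom _) fun k n x hk => ?_
    obtain rfl | rfl : k = 0 ∨ k = 1 := Nat.le_one_iff_eq_zero_or_eq_one.1 (mod_cast hk)
    · simpa only [norm_iteratedFDeriv_zero, if_pos] using hbound n x
    · simpa only [norm_iteratedFDeriv_one, if_neg one_ne_zero] using hbound' n x
  · exact (tsum_congr fun n => iterate_weightedComp_eq_zero hsub hDK n x hx).trans tsum_zero
  · calc ∑' n, L n x = D x + ∑' n, L (n + 1) x := (hsum x).tsum_eq_zero_add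
      _ = D x + ∑' n, ∑ i, c i * L n (ψ i x) := by
          simp only [L, iterate_succ_apply', weightedComp]
      _ = D x + ∑ i, c i * ∑' n, L n (ψ i x) := by
          rw [Summable.tsum_finsetSum fun i _ => (hsum _).mul_left _]
          simp only [tsum_mul_left]

end WeightedComp

lemma eq_zero_of_isCompact_of_norm_le_mul {X V : Type*} [TopologicalSpace X]
    [NormedAddCommGroup V] {s : Set X} (hs : IsCompact s) {F : X → V} (hF : ContinuousOn F s)
    {θ : ℝ} (hθ : θ < 1) (h : ∀ M, (∀ y ∈ s, ‖F y‖ ≤ M) → ∀ x ∈ s, ‖F x‖ ≤ θ * M) :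
    ∀ x ∈ s, F x = 0 := fun x hx => by
  obtain ⟨z, hz, hmax⟩ := hs.exists_isMaxOn ⟨x, hx⟩ hF.norm
  have hz0 : ‖F z‖ ≤ 0 := by nlinarith [h ‖F z‖ hmax z hz]
  exact norm_le_zero_iff.1 ((hmax hx).trans hz0)

section Staircase

variable {E ι : Type*} [Fintype ι] [NormedAddCommGroup E] [NormedSpace ℝ E] {ψ : ι → E → E}
  {c : ι → ℝ} {K γ : Set E} {θ : ℝ}

lemma fderiv_eq_zero_of_eq_sum_comp (hdisj : Pairwise (Disjoint on fun i => ψ i ⁻¹' K))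
    (hθ0 : 0 ≤ θ) (hθ1 : θ < 1) (hc : ∀ i x, |c i| * ‖fderiv ℝ (ψ i) x‖ ≤ θ)
    (hγ : IsCompact γ) {f : E → ℝ} (hf : ContDiff ℝ 1 f) {A : ι → E → E →L[ℝ] ℝ}
    (hfA : ∀ x ∈ γ, fderiv ℝ f x = ∑ i, c i • A i x)
    (hA : ∀ x ∈ γ, ∀ i, A i x = 0 ∨
      ψ i x ∈ γ ∩ K ∧ A i x = (fderiv ℝ f (ψ i x)).comp (fderiv ℝ (ψ i) x)) :
    ∀ x ∈ γ, fderiv ℝ f x = 0 := by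
  refine eq_zero_of_isCompact_of_norm_le_mul hγ (hf.continuous_fderiv one_ne_zero).continuousOn hθ1
    fun M hM x hx => ?_
  have hM0 : 0 ≤ M := (norm_nonneg _).trans (hM x hx)
  rw [hfA x hx]
  refine norm_sum_le_of_pairwise_eq_zero (mul_nonneg hθ0 hM0) (fun i j hij hi => ?_) fun i => ?_
  · have hiK : ψ i x ∈ K := ((hA x hx i).resolve_left (right_ne_zero_of_smul hi)).1.2
    have hjK : ψ j x ∉ K := disjoint_left.1 (hdisj hij) hiK
    rw [(hA x hx j).resolve_right fun h => hjK h.1.2, smul_zero]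
  · obtain h0 | ⟨hmem, heq⟩ := hA x hx i
    · rw [h0, smul_zero, norm_zero]
      exact mul_nonneg hθ0 hM0
    · calc ‖c i • A i x‖
          ≤ |c i| * (M * ‖fderiv ℝ (ψ i) x‖) := by
            rw [norm_smul, Real.norm_eq_abs, heq]
            gcongr
            exact (ContinuousLinearMap.opNorm_comp_le _ _).trans (by gcongr; exact hM _ hmem.1)
        _ = |c i| * ‖fderiv ℝ (ψ i) x‖ * M := by ring
        _ ≤ θ * M := by gcongr; exact hc i x

theorem exists_contDiff_fderiv_eq_zero_of_eq_weightedComp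
    (hK : IsClosed K) (hsub : ∀ i, ψ i ⁻¹' K ⊆ K)
    (hdisj : Pairwise (Disjoint on fun i => ψ i ⁻¹' K)) (hψ : ∀ i, ContDiff ℝ 1 (ψ i))
    (hθ0 : 0 ≤ θ) (hθ1 : θ < 1) (hc : ∀ i, |c i| ≤ θ)
    (hc' : ∀ i x, |c i| * ‖fderiv ℝ (ψ i) x‖ ≤ θ)
    {g : E → ℝ} {τ : ι → E → ℝ} (hg : ContDiff ℝ 1 g) (hτ : ∀ i, ContDiff ℝ 1 (τ i))
    (hcomp : HasCompactSupport fun x => ∑ i, c i * τ i x - g x)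
    (hout : ∀ x ∉ K, ∑ i, c i * τ i x - g x = 0) (hγ : IsCompact γ)
    (hg' : ∀ y ∈ γ, y ∉ K → fderiv ℝ g y = 0)
    (hτ' : ∀ x ∈ γ, ∀ i,
      ψ i x ∈ γ ∧ fderiv ℝ (τ i) x = (fderiv ℝ g (ψ i x)).comp (fderiv ℝ (ψ i) x) ∨
        ψ i x ∉ K ∧ fderiv ℝ (τ i) x = 0) :
    ∃ f : E → ℝ, ContDiff ℝ 1 f ∧ (∀ x ∈ γ, fderiv ℝ f x = 0) ∧
      ∀ x, (∀ i, ψ i x ∉ K) → f x = ∑ i, c i * τ i x := by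
  obtain ⟨H, hH, hHK, hHeq⟩ := exists_contDiff_eq_add_weightedComp hK hsub hdisj hψ hθ0 hθ1 hc hc'
    ((ContDiff.sum fun i _ => contDiff_const.mul (hτ i)).sub hg) hcomp hout
  have hgd : Differentiable ℝ g := hg.differentiable one_ne_zero
  have hHd : Differentiable ℝ H := hH.differentiable one_ne_zero
  have hH'K {x : E} (hx : x ∉ K) : fderiv ℝ H x = 0 := fderiv_eq_zero_of_notMem hK hHK hx
  have hf : g + H = fun x => ∑ i, c i * (τ i x + H (ψ i x)) := by
    funext x
    simp only [Pi.add_apply, hHeq x, weightedComp, mul_add, Finset.sum_add_distrib]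
    ring
  have hf' (x : E) : fderiv ℝ (g + H) x =
      ∑ i, c i • (fderiv ℝ (τ i) x + (fderiv ℝ H (ψ i x)).comp (fderiv ℝ (ψ i) x)) := by
    rw [hf]
    exact (HasFDerivAt.fun_sum fun i _ => (((hτ i).differentiable one_ne_zero x).hasFDerivAt.add
      ((hHd (ψ i x)).hasFDerivAt.comp x
        ((hψ i).differentiable one_ne_zero x).hasFDerivAt)).const_mul (c i)).fderiv
  refine ⟨g + H, hg.add hH, fderiv_eq_zero_of_eq_sum_comp hdisj hθ0 hθ1 hc' hγ (hg.add hH)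
    (fun x _ => hf' x) fun x hx i => ?_, fun x hx => ?_⟩
  · by_cases hiK : ψ i x ∈ K
    · obtain ⟨hmem, heq⟩ := (hτ' x hx i).resolve_right fun h => h.1 hiK
      rw [heq, fderiv_add (hgd _) (hHd _), ContinuousLinearMap.add_comp]
      exact Or.inr ⟨⟨hmem, hiK⟩, rfl⟩
    · rw [hH'K hiK, ContinuousLinearMap.zero_comp, add_zero]
      obtain ⟨hmem, heq⟩ | ⟨-, heq⟩ := hτ' x hx i
      · rw [heq, hg' _ hmem hiK, ContinuousLinearMap.zero_comp]
        exact Or.inl rfl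
      · exact Or.inl heq
  · simp only [hf, hHK _ (hx _), add_zero]

end Staircase

section Separation

open Metric

lemma image_cthickening_subset_of_lipschitzWith_one {X Y : Type*} [PseudoEMetricSpace X]
    [PseudoEMetricSpace Y] {φ : X → Y} (hφ : LipschitzWith 1 φ) (ε : ℝ) (s : Set X) :
    φ '' cthickening ε s ⊆ cthickening ε (φ '' s) := by
  rintro _ ⟨x, hx, rfl⟩
  refine mem_cthickening_iff.2 (le_trans ?_ (mem_cthickening_iff.1 hx))
  refine le_infEDist.2 fun y hy => (infEDist_le_edist_of_mem (mem_image_of_mem φ hy)).trans ?_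
  simpa only [ENNReal.coe_one, one_mul] using hφ.edist_le_mul x y

lemma exists_forall_disjoint_cthickening {X ι : Type*} [PseudoEMetricSpace X] [Finite ι]
    {s t : ι → Set X} (hs : ∀ i, IsCompact (s i)) (ht : ∀ i, IsClosed (t i))
    (hst : ∀ i, Disjoint (s i) (t i)) :
    ∃ ε > 0, ∀ i, Disjoint (cthickening ε (s i)) (cthickening ε (t i)) := by
  have hev (i : ι) : ∀ᶠ ε : ℝ in 𝓝[>] 0, Disjoint (cthickening ε (s i)) (cthickening ε (t i)) := by
    obtain ⟨δ, hδ, hdisj⟩ := (hst i).exists_cthickenings (hs i) (ht i)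
    exact mem_of_superset (Ioc_mem_nhdsGT hδ) fun ε hε =>
      hdisj.mono (cthickening_mono hε.2 _) (cthickening_mono hε.2 _)
  obtain ⟨ε, hε, hpos⟩ := ((eventually_all.2 hev).and self_mem_nhdsWithin).exists
  exact ⟨ε, hpos, hε⟩

lemma exists_isCompact_preimage_disjoint {X ι : Type*} [PseudoMetricSpace X] [ProperSpace X]
    [Finite ι] {φ ψ : ι → X → X} (hφ : ∀ i, LipschitzWith 1 (φ i))
    (hφψ : ∀ i, LeftInverse (φ i) (ψ i)) {C : Set X} (hC : IsCompact C)
    (hφC : ∀ i, φ i '' C ⊆ C) {R : ι → Set X} (hR : ∀ i, IsClosed (R i))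
    (hCR : ∀ i, Disjoint (φ i '' C) (R i)) (hφR : ∀ i j, i ≠ j → φ j '' C ⊆ R i) :
    ∃ K, IsCompact K ∧ C ⊆ interior K ∧ (∀ i, ψ i ⁻¹' K ⊆ K) ∧
      Pairwise (Disjoint on fun i => ψ i ⁻¹' K) ∧ ∀ i, ∀ x ∈ R i, ψ i x ∉ K := by
  obtain ⟨ε, hε, hdisj⟩ := exists_forall_disjoint_cthickening
    (fun i => hC.image (hφ i).continuous) hR hCR
  have hpre (i : ι) : ψ i ⁻¹' cthickening ε C ⊆ cthickening ε (φ i '' C) := fun x hx =>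
    image_cthickening_subset_of_lipschitzWith_one (hφ i) ε C ⟨ψ i x, hx, hφψ i x⟩
  refine ⟨cthickening ε C, hC.cthickening,
    (self_subset_thickening hε C).trans (thickening_subset_interior_cthickening ε C),
    fun i => (hpre i).trans (cthickening_subset_of_subset ε (hφC i)), fun i j hij => ?_,
    fun i x hx hxK => ?_⟩
  · exact (hdisj i).mono (hpre i)
      ((hpre j).trans (cthickening_subset_of_subset ε (hφR i j hij)))
  · exact disjoint_left.1 (hdisj i) (hpre i hxK) (self_subset_cthickening (R i) hx)

end Separation

section Interval

variable {k : ℝ → ℝ}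

lemma image_Icc_eq_uIcc_of_injOn {a b : ℝ} (hab : a ≤ b) (hk : ContinuousOn k (Icc a b))
    (hinj : InjOn k (Icc a b)) : k '' Icc a b = uIcc (k a) (k b) := by
  rw [← uIcc_of_le hab] at hk hinj ⊢
  obtain hmono | hanti := (uIcc_of_le hab ▸ hk).strictMonoOn_of_injOn_Icc' hab
    (uIcc_of_le hab ▸ hinj)
  · exact hk.image_uIcc_of_monotoneOn (uIcc_of_le hab ▸ hmono.monotoneOn)
  · exact hk.image_uIcc_of_antitoneOn (uIcc_of_le hab ▸ hanti.antitoneOn)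

lemma image_Ioo_eq_uIoo_of_injOn {a b : ℝ} (hab : a ≤ b) (hk : ContinuousOn k (Icc a b))
    (hinj : InjOn k (Icc a b)) : k '' Ioo a b = uIoo (k a) (k b) := by
  have ha : a ∈ Icc a b := left_mem_Icc.2 hab
  have hb : b ∈ Icc a b := right_mem_Icc.2 hab
  obtain hmono | hanti := hk.strictMonoOn_of_injOn_Icc' hab hinj
  · rw [hk.image_Ioo_of_strictMonoOn hab hmono, uIoo_of_le (hmono.monotoneOn ha hb hab)]
  · rw [hk.image_Ioo_of_strictAntiOn hab hanti, uIoo_of_ge (hanti.antitoneOn ha hb hab)]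

lemma max_le_min_or_of_subsingleton_uIcc_inter {a b c d : ℝ} (hab : a ≠ b) (hcd : c ≠ d)
    (h : (uIcc a b ∩ uIcc c d).Subsingleton) : max a b ≤ min c d ∨ max c d ≤ min a b := by
  rw [uIcc, uIcc, Icc_inter_Icc, subsingleton_Icc_iff] at h
  have hab' := min_lt_max.2 hab
  have hcd' := min_lt_max.2 hcd
  obtain h | h := inf_le_iff.1 h <;> obtain h | h := le_sup_iff.1 h
  · exact absurd h hab'.not_ge
  · exact Or.inl h
  · exact Or.inr h
  · exact absurd h hcd'.not_ge

/-- `P` is the side of `k 0` and `Q` that of `k 1`; the final alternative is whether `k` preserves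
or reverses the orientation. -/
lemma exists_isClosed_sides {δ : ℝ} (hδ : δ ∈ Ioo 0 (1 / 2)) (hk : ContinuousOn k (Icc 0 1))
    (hinj : InjOn k (Icc 0 1)) (hmaps : MapsTo k (Icc 0 1) (Ioo δ (1 - δ))) :
    ∃ P ⊆ Icc 0 1, ∃ Q ⊆ Icc 0 1, IsClosed P ∧ IsClosed Q ∧ Disjoint P Q ∧
      MapsTo k (Icc 0 δ) P ∧ MapsTo k (Icc (1 - δ) 1) Q ∧
      Icc 0 1 \ k '' Ioo δ (1 - δ) ⊆ P ∪ Q ∧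
      (Icc 0 δ ⊆ P ∧ Icc (1 - δ) 1 ⊆ Q ∨ Icc 0 δ ⊆ Q ∧ Icc (1 - δ) 1 ⊆ P) := by
  obtain ⟨hδ0, hδ2⟩ := hδ
  have hle : δ ≤ 1 - δ := by linarith
  have hsub : Icc δ (1 - δ) ⊆ Icc 0 1 := Icc_subset_Icc hδ0.le (by linarith)
  have hl : δ ∈ Icc (0 : ℝ) 1 := hsub (left_mem_Icc.2 hle)
  have hr : 1 - δ ∈ Icc (0 : ℝ) 1 := hsub (right_mem_Icc.2 hle)
  have hkl := hmaps hl
  have hkr := hmaps hr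
  have hhead {t : ℝ} (ht : t ∈ Icc 0 δ) : t ∈ Icc (0 : ℝ) 1 := ⟨ht.1, ht.2.trans hl.2⟩
  have htail {t : ℝ} (ht : t ∈ Icc (1 - δ) 1) : t ∈ Icc (0 : ℝ) 1 := ⟨hr.1.trans ht.1, ht.2⟩
  have hI {a : ℝ} (ha : a ∈ Ioo δ (1 - δ)) : Icc 0 a ⊆ Icc 0 1 ∧ Icc a 1 ⊆ Icc 0 1 :=
    ⟨Icc_subset_Icc_right (by linarith [ha.2]), Icc_subset_Icc_left (by linarith [ha.1])⟩
  have hends {a : ℝ} (ha : a ∈ Ioo δ (1 - δ)) : Icc 0 δ ⊆ Icc 0 a ∧ Icc (1 - δ) 1 ⊆ Icc a 1 :=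
    ⟨Icc_subset_Icc_right ha.1.le, Icc_subset_Icc_left ha.2.le⟩
  have hdisj {a b : ℝ} (hab : a < b) : Disjoint (Icc 0 a) (Icc b 1) :=
    disjoint_left.2 fun t hta htb => (hab.trans_le htb.1).not_ge hta.2
  have hcover {a b : ℝ} : Icc (0 : ℝ) 1 \ Ioo a b ⊆ Icc 0 a ∪ Icc b 1 := fun t ht =>
    (le_or_gt t a).imp (fun hta => ⟨ht.1.1, hta⟩)
      fun hat => ⟨not_lt.1 fun htb => ht.2 ⟨hat, htb⟩, ht.1.2⟩
  obtain hmono | hanti := hk.strictMonoOn_of_injOn_Icc' zero_le_one hinj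
  · rw [(hk.mono hsub).image_Ioo_of_strictMonoOn hle (hmono.mono hsub)]
    exact ⟨Icc 0 (k δ), (hI hkl).1, Icc (k (1 - δ)) 1, (hI hkr).2, isClosed_Icc, isClosed_Icc,
      hdisj (hmono hl hr (by linarith)),
      fun t ht => ⟨hδ0.le.trans (hmaps (hhead ht)).1.le, hmono.monotoneOn (hhead ht) hl ht.2⟩,
      fun t ht => ⟨hmono.monotoneOn hr (htail ht) ht.1, (hmaps (htail ht)).2.le.trans hr.2⟩,
      hcover, Or.inl ⟨(hends hkl).1, (hends hkr).2⟩⟩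
  · rw [(hk.mono hsub).image_Ioo_of_strictAntiOn hle (hanti.mono hsub)]
    exact ⟨Icc (k δ) 1, (hI hkl).2, Icc 0 (k (1 - δ)), (hI hkr).1, isClosed_Icc, isClosed_Icc,
      (hdisj (hanti hl hr (by linarith))).symm,
      fun t ht => ⟨hanti.antitoneOn (hhead ht) hl ht.2, (hmaps (hhead ht)).2.le.trans hr.2⟩,
      fun t ht => ⟨hδ0.le.trans (hmaps (htail ht)).1.le, hanti.antitoneOn hr (htail ht) ht.1⟩,
      hcover.trans (union_comm _ _).subset, Or.inr ⟨(hends hkr).1, (hends hkl).2⟩⟩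

end Interval

section ArcLift

lemma continuousOn_invFunOn_of_isCompact {X Y : Type*}
    [TopologicalSpace X] [T2Space X] [TopologicalSpace Y] [Nonempty Y] {s : Set Y} {h : Y → X}
    (hs : IsCompact s) (hc : ContinuousOn h s) (hi : InjOn h s) :
    ContinuousOn (invFunOn h s) (h '' s) := by
  refine continuousOn_iff_isClosed.2 fun t ht => ⟨h '' (s ∩ t),
    ((hs.inter_right ht).image_of_continuousOn (hc.mono inter_subset_left)).isClosed, ?_⟩
  ext x
  refine and_congr_left ?_
  rintro ⟨y, hy, rfl⟩
  rw [mem_preimage, hi.leftInvOn_invFunOn hy, hi.mem_image_iff inter_subset_left hy]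
  exact (and_iff_right hy).symm

variable {X : Type*} {h : ℝ → X} {φ : X → X} {k : ℝ → ℝ}

/-- `k` is a continuous injection that expresses, in the parameter of the arc `h '' Icc 0 1`, a map
`φ` of that arc into itself. -/
structure IsArcLift (h : ℝ → X) (φ : X → X) (k : ℝ → ℝ) : Prop where
  continuousOn : ContinuousOn k (Icc 0 1)
  injOn : InjOn k (Icc 0 1)
  mapsTo : MapsTo k (Icc 0 1) (Icc 0 1)
  apply_eq : ∀ t ∈ Icc 0 1, φ (h t) = h (k t)

lemma exists_isArcLift [TopologicalSpace X] [T2Space X] (hc : ContinuousOn h (Icc 0 1))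
    (hi : InjOn h (Icc 0 1)) (hφ : Continuous φ) (hinj : Injective φ)
    (hmaps : MapsTo φ (h '' Icc 0 1) (h '' Icc 0 1)) :
    ∃ k, IsArcLift h φ k := by
  have hmaps' : MapsTo (φ ∘ h) (Icc 0 1) (h '' Icc 0 1) := hmaps.comp (mapsTo_image h _)
  have hinv : MapsTo (invFunOn h (Icc 0 1)) (h '' Icc 0 1) (Icc 0 1) :=
    (surjOn_image h _).mapsTo_invFunOn
  have hright : RightInvOn (invFunOn h (Icc 0 1)) h (h '' Icc 0 1) :=
    (surjOn_image h _).rightInvOn_invFunOn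
  exact ⟨invFunOn h (Icc 0 1) ∘ φ ∘ h,
    (continuousOn_invFunOn_of_isCompact isCompact_Icc hc hi).comp (hφ.comp_continuousOn hc) hmaps',
    hright.injOn.comp (hinj.injOn.comp hi (mapsTo_univ _ _)) hmaps', hinv.comp hmaps',
    fun t ht => (hright (hmaps' ht)).symm⟩

namespace IsArcLift

lemma image_image (F : IsArcLift h φ k) {s : Set ℝ} (hs : s ⊆ Icc 0 1) :
    φ '' (h '' s) = h '' (k '' s) := by
  rw [Set.image_image, Set.image_image]
  exact image_congr fun t ht => F.apply_eq t (hs ht)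

lemma image_Icc (F : IsArcLift h φ k) : k '' Icc 0 1 = uIcc (k 0) (k 1) :=
  image_Icc_eq_uIcc_of_injOn zero_le_one F.continuousOn F.injOn

lemma image_Ioo (F : IsArcLift h φ k) : k '' Ioo 0 1 = uIoo (k 0) (k 1) :=
  image_Ioo_eq_uIoo_of_injOn zero_le_one F.continuousOn F.injOn

lemma apply_zero_ne_apply_one (F : IsArcLift h φ k) : k 0 ≠ k 1 := fun heq =>
  zero_ne_one (F.injOn (left_mem_Icc.2 zero_le_one) (right_mem_Icc.2 zero_le_one) heq)

end IsArcLift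

end ArcLift

section ArcPieces

variable {X ι : Type*} {h : ℝ → X}

lemma disjoint_uIcc_uIoo_of_max_le_min {a b c d : ℝ}
    (h : max a b ≤ min c d ∨ max c d ≤ min a b) : Disjoint (uIcc a b) (uIoo c d) :=
  disjoint_left.2 fun _ ht hs =>
    h.elim (fun h => (ht.2.trans h).not_gt hs.1) fun h => (h.trans ht.1).not_gt hs.2

namespace IsArcLift

variable {φ φ' : X → X} {k k' : ℝ → ℝ}

lemma uIcc_subset (F : IsArcLift h φ k) : uIcc (k 0) (k 1) ⊆ Icc 0 1 :=
  F.image_Icc ▸ F.mapsTo.image_subset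

lemma image_image_Icc (F : IsArcLift h φ k) :
    φ '' (h '' Icc 0 1) = h '' uIcc (k 0) (k 1) := by
  rw [F.image_image subset_rfl, F.image_Icc]

lemma max_le_min_or (hi : InjOn h (Icc 0 1)) (F : IsArcLift h φ k) (F' : IsArcLift h φ' k')
    (hov : (φ '' (h '' Icc 0 1) ∩ φ' '' (h '' Icc 0 1)).Subsingleton) :
    max (k 0) (k 1) ≤ min (k' 0) (k' 1) ∨ max (k' 0) (k' 1) ≤ min (k 0) (k 1) := by
  rw [F.image_image_Icc, F'.image_image_Icc, ← hi.image_inter F.uIcc_subset F'.uIcc_subset] at hov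
  exact max_le_min_or_of_subsingleton_uIcc_inter F.apply_zero_ne_apply_one
    F'.apply_zero_ne_apply_one
    fun _ hs _ ht => hi (F.uIcc_subset hs.1) (F.uIcc_subset ht.1)
      (hov (mem_image_of_mem h hs) (mem_image_of_mem h ht))

lemma mapsTo_Ioo (F : IsArcLift h φ k) (h0 : h 0 ∉ φ '' (h '' Icc 0 1))
    (h1 : h 1 ∉ φ '' (h '' Icc 0 1)) : MapsTo k (Icc 0 1) (Ioo 0 1) := fun t ht => by
  have hmem : h (k t) ∈ φ '' (h '' Icc 0 1) := ⟨h t, mem_image_of_mem h ht, F.apply_eq t ht⟩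
  exact ⟨(F.mapsTo ht).1.lt_of_ne' fun hkt => h0 (hkt ▸ hmem),
    (F.mapsTo ht).2.lt_of_ne fun hkt => h1 (hkt ▸ hmem)⟩

end IsArcLift

lemma exists_mapsTo_Ioo_of_mapsTo_Ioo [Finite ι] {φ : ι → X → X} {k : ι → ℝ → ℝ}
    (hk : ∀ i, IsArcLift h (φ i) (k i)) (hmaps : ∀ i, MapsTo (k i) (Icc 0 1) (Ioo 0 1)) :
    ∃ δ ∈ Ioo (0 : ℝ) (1 / 2), ∀ i, MapsTo (k i) (Icc 0 1) (Ioo δ (1 - δ)) := by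
  have hev {t : ℝ} (ht : t ∈ Ioo 0 1) : ∀ᶠ δ in 𝓝[>] (0 : ℝ), t ∈ Ioo δ (1 - δ) := by
    filter_upwards [Ioo_mem_nhdsGT (lt_min ht.1 (sub_pos.2 ht.2))] with δ hδ
    exact ⟨hδ.2.trans_le (min_le_left _ _), by linarith [hδ.2.trans_le (min_le_right t (1 - t))]⟩
  have hends (i : ι) : ∀ᶠ δ in 𝓝[>] (0 : ℝ), k i 0 ∈ Ioo δ (1 - δ) ∧ k i 1 ∈ Ioo δ (1 - δ) :=
    (hev (hmaps i (left_mem_Icc.2 zero_le_one))).and (hev (hmaps i (right_mem_Icc.2 zero_le_one)))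
  obtain ⟨δ, hδ, hδ'⟩ := ((eventually_all.2 hends).and
    (Ioo_mem_nhdsGT (one_half_pos (α := ℝ)))).exists
  exact ⟨δ, hδ', fun i => mapsTo_iff_image_subset.2 <|
    (hk i).image_Icc.trans_subset (ordConnected_Ioo.uIcc_subset (hδ i).1 (hδ i).2)⟩

variable [MetricSpace X] {φ : ι → X → X} {ρ : ι → ℝ}

lemma SimilitudeSystem.exists_isArcLift (F : SimilitudeSystem (h '' Icc 0 1) φ ρ)
    (hc : ContinuousOn h (Icc 0 1)) (hi : InjOn h (Icc 0 1)) :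
    ∃ k : ι → ℝ → ℝ, ∀ i, IsArcLift h (φ i) (k i) := by
  choose k hk using fun i =>
    _root_.exists_isArcLift hc hi (F.lipschitzWith i).continuous (F.injective i) (F.mapsTo i)
  exact ⟨k, hk⟩

lemma SimilitudeSystem.subsingleton_setOf_mem_image (F : SimilitudeSystem (h '' Icc 0 1) φ ρ)
    (hi : InjOn h (Icc 0 1)) {k : ι → ℝ → ℝ} (hk : ∀ i, IsArcLift h (φ i) (k i)) {e : ℝ}
    (he : e = 0 ∨ e = 1) : {i | h e ∈ φ i '' (h '' Icc 0 1)}.Subsingleton := by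
  have heI : e ∈ Icc (0 : ℝ) 1 := by rcases he with rfl | rfl <;> simp
  have hmem {i : ι} (hei : h e ∈ φ i '' (h '' Icc 0 1)) : e ∈ uIcc (k i 0) (k i 1) := by
    rwa [(hk i).image_image_Icc, hi.mem_image_iff (hk i).uIcc_subset heI] at hei
  have hends (i : ι) : 0 ≤ min (k i 0) (k i 1) ∧ min (k i 0) (k i 1) < max (k i 0) (k i 1) ∧
      max (k i 0) (k i 1) ≤ 1 :=
    ⟨((hk i).uIcc_subset ⟨le_rfl, min_le_max⟩).1, min_lt_max.2 (hk i).apply_zero_ne_apply_one,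
      ((hk i).uIcc_subset ⟨min_le_max, le_rfl⟩).2⟩
  refine fun i hei j hej => not_not.1 fun hij => ?_
  obtain ⟨hi1, hi2⟩ := hmem hei
  obtain ⟨hj1, hj2⟩ := hmem hej
  have hi' := hends i
  have hj' := hends j
  rcases (hk i).max_le_min_or hi (hk j) (F.overlap hij) with h | h <;> rcases he with rfl | rfl
  all_goals linarith

lemma SimilitudeSystem.exists_isCompact_core [ProperSpace X] [Finite ι]
    (F : SimilitudeSystem (h '' Icc 0 1) φ ρ) (hc : ContinuousOn h (Icc 0 1))
    (hi : InjOn h (Icc 0 1)) {k : ι → ℝ → ℝ} (hk : ∀ i, IsArcLift h (φ i) (k i)) {δ : ℝ}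
    (hδ : 0 < δ) (hmaps : ∀ i, MapsTo (k i) (Icc 0 1) (Icc δ (1 - δ))) {ψ : ι → X → X}
    (hφψ : ∀ i, LeftInverse (φ i) (ψ i)) :
    ∃ K, IsCompact K ∧ h '' Icc δ (1 - δ) ⊆ interior K ∧ (∀ i, ψ i ⁻¹' K ⊆ K) ∧
      Pairwise (Disjoint on fun i => ψ i ⁻¹' K) ∧
      ∀ i, ∀ x ∈ h '' Icc 0 1 \ φ i '' (h '' Icc 0 1), ψ i x ∉ K := by
  have hsub : Icc δ (1 - δ) ⊆ Ioo 0 1 := Icc_subset_Ioo hδ (by linarith)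
  have hsub' : Icc δ (1 - δ) ⊆ Icc 0 1 := hsub.trans Ioo_subset_Icc_self
  have hcompact {s : Set ℝ} (hs : IsCompact s) (hsI : s ⊆ Icc 0 1) : IsCompact (h '' s) :=
    hs.image_of_continuousOn (hc.mono hsI)
  have hφC (i : ι) : φ i '' (h '' Icc δ (1 - δ)) ⊆ h '' Icc δ (1 - δ) := by
    rw [(hk i).image_image hsub']
    exact image_mono ((hmaps i).mono_left hsub').image_subset
  have hCR (i : ι) : Disjoint (φ i '' (h '' Icc δ (1 - δ)))
      (h '' (Icc 0 1 \ uIoo (k i 0) (k i 1))) := by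
    rw [(hk i).image_image hsub']
    exact (disjoint_sdiff_right.mono_left ((hk i).image_Ioo ▸ image_mono hsub)).image hi
      ((hk i).mapsTo.mono_left hsub').image_subset sdiff_subset
  have hφR (i j : ι) (hij : i ≠ j) :
      φ j '' (h '' Icc δ (1 - δ)) ⊆ h '' (Icc 0 1 \ uIoo (k i 0) (k i 1)) := by
    refine (image_mono (image_mono hsub')).trans ?_
    rw [(hk j).image_image_Icc]
    exact image_mono (subset_sdiff.2 ⟨(hk j).uIcc_subset, disjoint_uIcc_uIoo_of_max_le_min <|
      (hk j).max_le_min_or hi (hk i) (F.overlap hij.symm)⟩)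
  obtain ⟨K, hK, hCK, hpre, hdisj, hR⟩ := exists_isCompact_preimage_disjoint F.lipschitzWith hφψ
    (hcompact isCompact_Icc hsub') hφC
    (fun i => (hcompact (isCompact_Icc.diff isOpen_Ioo) sdiff_subset).isClosed) hCR hφR
  refine ⟨K, hK, hCK, hpre, hdisj, fun i x hx => hR i x ?_⟩
  obtain ⟨⟨t, ht, rfl⟩, hti⟩ := hx
  rw [(hk i).image_image_Icc] at hti
  exact mem_image_of_mem h ⟨ht, fun htk => hti (mem_image_of_mem h (uIoo_subset_uIcc_self htk))⟩

end ArcPieces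

section Blend

variable {E : Type*} {χ g σ : E → ℝ} {ψ : E → E}

/-- The function equal to `g ∘ ψ` where the cutoff `χ ∘ ψ` is `1` and to `σ` where it is `0`. -/
def blend (χ : E → ℝ) (ψ : E → E) (g σ : E → ℝ) (x : E) : ℝ :=
  σ x + χ (ψ x) * (g (ψ x) - σ x)

lemma blend_of_eq_zero {x : E} (h : χ (ψ x) = 0) : blend χ ψ g σ x = σ x := by
  rw [blend, h, zero_mul, add_zero]

variable [NormedAddCommGroup E] [NormedSpace ℝ E]

lemma contDiff_blend {n : WithTop ℕ∞} (hχ : ContDiff ℝ n χ) (hψ : ContDiff ℝ n ψ)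
    (hg : ContDiff ℝ n g) (hσ : ContDiff ℝ n σ) : ContDiff ℝ n (blend χ ψ g σ) :=
  hσ.add ((hχ.comp hψ).mul ((hg.comp hψ).sub hσ))

lemma fderiv_blend (hχ : Differentiable ℝ χ) (hψ : Differentiable ℝ ψ) (hg : Differentiable ℝ g)
    (hσ : Differentiable ℝ σ) (x : E) :
    fderiv ℝ (blend χ ψ g σ) x = fderiv ℝ σ x +
      (χ (ψ x) • ((fderiv ℝ g (ψ x)).comp (fderiv ℝ ψ x) - fderiv ℝ σ x) +
        (g (ψ x) - σ x) • (fderiv ℝ χ (ψ x)).comp (fderiv ℝ ψ x)) :=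
  have hcomp {u : E → ℝ} (hu : Differentiable ℝ u) :
      HasFDerivAt (u ∘ ψ) ((fderiv ℝ u (ψ x)).comp (fderiv ℝ ψ x)) x :=
    (hu (ψ x)).hasFDerivAt.comp x (hψ x).hasFDerivAt
  ((hσ x).hasFDerivAt.add ((hcomp hχ).mul ((hcomp hg).sub (hσ x).hasFDerivAt))).fderiv

lemma fderiv_blend_cases {φ : E → E} {γ C K : Set E} (hψφ : LeftInverse ψ φ) (hCγ : C ⊆ γ)
    (hχ : ContDiff ℝ 1 χ) (hψ : ContDiff ℝ 1 ψ) (hg : ContDiff ℝ 1 g) (hσ : ContDiff ℝ 1 σ)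
    (hχ0 : ∀ x ∉ K, χ x = 0 ∧ fderiv ℝ χ x = 0) (hχ1 : ∀ x ∈ C, χ x = 1 ∧ fderiv ℝ χ x = 0)
    (hg' : ∀ y ∈ γ \ C, g y = σ (φ y) ∧ fderiv ℝ g y = 0)
    (hσ' : ∀ x ∈ γ \ φ '' C, fderiv ℝ σ x = 0) (hK : ∀ x ∈ γ \ φ '' γ, ψ x ∉ K) :
    ∀ x ∈ γ, ψ x ∈ γ ∧ fderiv ℝ (blend χ ψ g σ) x = (fderiv ℝ g (ψ x)).comp (fderiv ℝ ψ x) ∨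
      ψ x ∉ K ∧ fderiv ℝ (blend χ ψ g σ) x = 0 := fun x hx => by
  rw [fderiv_blend (hχ.differentiable one_ne_zero) (hψ.differentiable one_ne_zero)
    (hg.differentiable one_ne_zero) (hσ.differentiable one_ne_zero)]
  by_cases hxφ : x ∈ φ '' γ
  · obtain ⟨y, hy, rfl⟩ := hxφ
    rw [hψφ]
    refine Or.inl ⟨hy, ?_⟩
    by_cases hyC : y ∈ C
    · rw [(hχ1 y hyC).1, (hχ1 y hyC).2, one_smul, ContinuousLinearMap.zero_comp, smul_zero,
        add_zero, add_sub_cancel]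
    · obtain ⟨hgσ, hgy⟩ := hg' y ⟨hy, hyC⟩
      rw [hσ' (φ y) ⟨hx, fun h => hyC (hψφ.injective.mem_set_image.1 h)⟩, hgσ, hgy, sub_self,
        zero_smul, ContinuousLinearMap.zero_comp, sub_zero, smul_zero, add_zero, add_zero]
  · have hψK : ψ x ∉ K := hK x ⟨hx, hxφ⟩
    refine Or.inr ⟨hψK, ?_⟩
    rw [(hχ0 _ hψK).1, (hχ0 _ hψK).2, hσ' x ⟨hx, fun h => hxφ (image_mono hCγ h)⟩, zero_smul,
      ContinuousLinearMap.zero_comp, smul_zero, add_zero, add_zero]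

end Blend

section Transition

variable {E : Type*} [NormedAddCommGroup E] [NormedSpace ℝ E] {h : ℝ → E} {φ : E → E} {δ : ℝ}

/-- A `C¹` function which, along the arc `h '' Icc 0 1`, passes from one constant to another only
inside the middle part `φ '' (h '' Icc δ (1 - δ))` of the piece `φ '' (h '' Icc 0 1)`, being `0` at
the end `φ (h 0)` of the piece and `1` at the end `φ (h 1)`. As `φ` may reverse the arc, it is the
values at `φ (h 0)` and `φ (h 1)`, not those at `h 0` and `h 1`, that are prescribed. -/
structure IsTransition (h : ℝ → E) (φ : E → E) (δ : ℝ) (σ : E → ℝ) : Prop where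
  contDiff : ContDiff ℝ 1 σ
  apply_head : ∀ t ∈ Icc 0 δ, σ (φ (h t)) = 0
  apply_tail : ∀ t ∈ Icc (1 - δ) 1, σ (φ (h t)) = 1
  head_eq : ∀ t ∈ Icc 0 δ, σ (h t) = σ (h 0)
  tail_eq : ∀ t ∈ Icc (1 - δ) 1, σ (h t) = σ (h 1)
  abs_sub : |σ (h 1) - σ (h 0)| = 1
  fderiv_eq : ∀ x ∈ h '' Icc 0 1 \ φ '' (h '' Icc δ (1 - δ)), fderiv ℝ σ x = 0

lemma IsTransition.sq_sub {σ : E → ℝ} (F : IsTransition h φ δ σ) :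
    (σ (h 1) - σ (h 0)) ^ 2 = 1 := by
  rw [← sq_abs, F.abs_sub, one_pow]

lemma IsArcLift.exists_isTransition [FiniteDimensional ℝ E] (hδ : δ ∈ Ioo 0 (1 / 2))
    (hc : ContinuousOn h (Icc 0 1)) (hi : InjOn h (Icc 0 1)) {k : ℝ → ℝ} (F : IsArcLift h φ k)
    (hmaps : MapsTo k (Icc 0 1) (Ioo δ (1 - δ))) : ∃ σ, IsTransition h φ δ σ := by
  obtain ⟨P, hPI, Q, hQI, hP, hQ, hPQ, hkP, hkQ, hcover, hends⟩ :=
    exists_isClosed_sides hδ F.continuousOn F.injOn hmaps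
  have hclosed {s : Set ℝ} (hs : IsClosed s) (hsI : s ⊆ Icc 0 1) : IsClosed (h '' s) :=
    ((isCompact_Icc.of_isClosed_subset hs hsI).image_of_continuousOn (hc.mono hsI)).isClosed
  obtain ⟨σ, hσ, hσP, hσQ⟩ :=
    exists_contDiff_step (hclosed hP hPI) (hclosed hQ hQI) (hPQ.image hi hPI hQI)
  simp only [forall_mem_image] at hσP hσQ
  have hhead : Icc 0 δ ⊆ Icc 0 1 := Icc_subset_Icc_right (by linarith [hδ.2])
  have htail : Icc (1 - δ) 1 ⊆ Icc 0 1 := Icc_subset_Icc_left (by linarith [hδ.2])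
  have h0 : (0 : ℝ) ∈ Icc 0 δ := left_mem_Icc.2 hδ.1.le
  have h1 : (1 : ℝ) ∈ Icc (1 - δ) 1 := right_mem_Icc.2 (by linarith [hδ.1])
  refine ⟨σ, hσ, fun t ht => ?_, fun t ht => ?_, fun t ht => ?_, fun t ht => ?_, ?_, ?_⟩
  · rw [F.apply_eq t (hhead ht), (hσP (hkP ht)).1]
  · rw [F.apply_eq t (htail ht), (hσQ (hkQ ht)).1]
  · obtain ⟨hl, -⟩ | ⟨hl, -⟩ := hends
    · rw [(hσP (hl ht)).1, (hσP (hl h0)).1]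
    · rw [(hσQ (hl ht)).1, (hσQ (hl h0)).1]
  · obtain ⟨-, hr⟩ | ⟨-, hr⟩ := hends
    · rw [(hσQ (hr ht)).1, (hσQ (hr h1)).1]
    · rw [(hσP (hr ht)).1, (hσP (hr h1)).1]
  · obtain ⟨hl, hr⟩ | ⟨hl, hr⟩ := hends
    · rw [(hσQ (hr h1)).1, (hσP (hl h0)).1, sub_zero, abs_one]
    · rw [(hσP (hr h1)).1, (hσQ (hl h0)).1, zero_sub, abs_neg, abs_one]
  · rw [F.image_image (Icc_subset_Icc hδ.1.le (by linarith [hδ.1]))]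
    rintro _ ⟨⟨t, ht, rfl⟩, htk⟩
    have htPQ : t ∈ P ∪ Q := hcover ⟨ht, fun hk =>
      htk (mem_image_of_mem h (image_mono Ioo_subset_Icc_self hk))⟩
    exact htPQ.elim (fun htP => (hσP htP).2) fun htQ => (hσQ htQ).2

end Transition

theorem exists_contDiff_fderiv_eq_zero_of_blend {E ι : Type*} [Fintype ι] [NormedAddCommGroup E]
    [NormedSpace ℝ E] [FiniteDimensional ℝ E] {φ ψ : ι → E → E} {c b : ι → ℝ} {σ : ι → E → ℝ}
    {K γ C : Set E} {θ : ℝ} (hK : IsCompact K) (hsub : ∀ i, ψ i ⁻¹' K ⊆ K)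
    (hdisj : Pairwise (Disjoint on fun i => ψ i ⁻¹' K)) (hψ : ∀ i, ContDiff ℝ 1 (ψ i))
    (hψφ : ∀ i, LeftInverse (ψ i) (φ i)) (hθ0 : 0 ≤ θ) (hθ1 : θ < 1) (hc : ∀ i, |c i| ≤ θ)
    (hc' : ∀ i x, |c i| * ‖fderiv ℝ (ψ i) x‖ ≤ θ) (hσ : ∀ i, ContDiff ℝ 1 (σ i))
    (hγ : IsCompact γ) (hC : IsClosed C) (hCγ : C ⊆ γ) (hCK : C ⊆ interior K)
    (hφC : ∀ i, φ i '' C ⊆ C) (hKγ : ∀ i, ∀ x ∈ γ \ φ i '' γ, ψ i x ∉ K)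
    (hσ' : ∀ i, ∀ x ∈ γ \ φ i '' C, fderiv ℝ (σ i) x = 0)
    (hend : ∀ y ∈ γ \ C, ∀ i, ∑ j, c j * (σ j y - b j) = σ i (φ i y)) :
    ∃ f : E → ℝ, ContDiff ℝ 1 f ∧ (∀ x ∈ γ, fderiv ℝ f x = 0) ∧
      ∀ x, (∀ i, ψ i x ∉ K) → f x = ∑ i, c i * (σ i x - b i) := by
  obtain ⟨χ, hχ, hχ0, hχ1⟩ := exists_contDiff_step isOpen_interior.isClosed_compl hC
    (disjoint_compl_left_iff_subset.2 hCK)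
  replace hχ0 (x : E) (hx : x ∉ K) := hχ0 x fun hxK => hx (interior_subset hxK)
  set g : E → ℝ := fun x => ∑ i, c i * (σ i x - b i)
  have hg : ContDiff ℝ 1 g := ContDiff.sum fun i _ => contDiff_const.mul ((hσ i).sub contDiff_const)
  have hg' (y : E) (hy : y ∈ γ \ C) : fderiv ℝ g y = 0 := by
    have hsum : HasFDerivAt g (∑ i, c i • fderiv ℝ (σ i) y) y := HasFDerivAt.fun_sum fun i _ =>
      (((hσ i).differentiable one_ne_zero y).hasFDerivAt.sub_const (b i)).const_mul (c i)
    rw [hsum.fderiv]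
    exact Finset.sum_eq_zero fun i _ => by
      rw [hσ' i y ⟨hy.1, fun h => hy.2 (hφC i h)⟩, smul_zero]
  have hout {x : E} (hx : ∀ i, ψ i x ∉ K) :
      ∑ i, c i * (blend χ (ψ i) g (σ i) x - b i) = g x :=
    Finset.sum_congr rfl fun i _ => by rw [blend_of_eq_zero (hχ0 _ (hx i)).1]
  have hout' (x : E) (hx : x ∉ K) :
      ∑ i, c i * (blend χ (ψ i) g (σ i) x - b i) - g x = 0 :=
    sub_eq_zero.2 (hout fun i h => hx (hsub i h))
  obtain ⟨f, hf, hf', hfout⟩ := exists_contDiff_fderiv_eq_zero_of_eq_weightedComp hK.isClosed hsub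
    hdisj hψ hθ0 hθ1 hc hc' hg (fun i => (contDiff_blend hχ (hψ i) hg (hσ i)).sub contDiff_const)
    (HasCompactSupport.intro hK hout') hout' hγ
    (fun y hy hyK => hg' y ⟨hy, fun h => hyK (interior_subset (hCK h))⟩) fun x hx i => by
      rw [fderiv_sub_const]
      exact fderiv_blend_cases (hψφ i) hCγ hχ (hψ i) hg (hσ i) hχ0 hχ1
        (fun y hy => ⟨hend y hy i, hg' y hy⟩) (hσ' i) (hKγ i) x hx
  exact ⟨f, hf, hf', fun x hx => (hfout x hx).trans (hout hx)⟩

section Arc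

variable {E ι : Type*} [NormedAddCommGroup E] [NormedSpace ℝ E] [Fintype ι] {h : ℝ → E}
  {φ : ι → E → E} {ρ : ι → ℝ}

lemma sum_transition_eq {δ : ℝ} {σ : ι → E → ℝ} (hσ : ∀ i, IsTransition h (φ i) δ (σ i))
    {p : ι → ℝ} (hp : ∑ i, p i = 1) {t : ℝ} (ht : t ∈ Icc 0 1 \ Icc δ (1 - δ)) (i : ι) :
    ∑ j, (σ j (h 1) - σ j (h 0)) * p j * (σ j (h t) - σ j (h 0)) = σ i (φ i (h t)) := by
  obtain htδ | htδ : t ∈ Icc 0 δ ∨ t ∈ Icc (1 - δ) 1 :=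
    (le_total t δ).imp (fun h => ⟨ht.1.1, h⟩)
      fun h => ⟨le_of_not_ge fun h' => ht.2 ⟨h, h'⟩, ht.1.2⟩
  · simp only [(hσ _).apply_head t htδ, (hσ _).head_eq t htδ, sub_self, mul_zero,
      Finset.sum_const_zero]
  · rw [(hσ i).apply_tail t htδ]
    refine (Finset.sum_congr rfl fun j _ => ?_).trans hp
    rw [(hσ j).tail_eq t htδ]
    linear_combination p j * (hσ j).sq_sub

variable [FiniteDimensional ℝ E] [StrictConvexSpace ℝ E]

theorem SimilitudeSystem.exists_contDiff_eq_sum_transition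
    (F : SimilitudeSystem (h '' Icc 0 1) φ ρ) (hc : ContinuousOn h (Icc 0 1))
    (hi : InjOn h (Icc 0 1)) (hsum : 1 < ∑ i, ρ i) {k : ι → ℝ → ℝ}
    (hk : ∀ i, IsArcLift h (φ i) (k i)) {δ : ℝ} (hδ : δ ∈ Ioo 0 (1 / 2))
    (hmaps : ∀ i, MapsTo (k i) (Icc 0 1) (Ioo δ (1 - δ))) {σ : ι → E → ℝ}
    (hσ : ∀ i, IsTransition h (φ i) δ (σ i)) :
    ∃ f : E → ℝ, ContDiff ℝ 1 f ∧ (∀ x ∈ h '' Icc 0 1, fderiv ℝ f x = 0) ∧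
      ∀ x ∈ h '' Icc 0 1, (∀ i, x ∉ φ i '' (h '' Icc 0 1)) →
        f x = ∑ i, (σ i (h 1) - σ i (h 0)) * (ρ i / ∑ j, ρ j) * (σ i x - σ i (h 0)) := by
  have hCI : Icc δ (1 - δ) ⊆ Icc 0 1 := Icc_subset_Icc hδ.1.le (by linarith [hδ.1])
  have hcompact {s : Set ℝ} (hs : IsCompact s) (hsI : s ⊆ Icc 0 1) : IsCompact (h '' s) :=
    hs.image_of_continuousOn (hc.mono hsI)
  have hmaps' (i : ι) : MapsTo (k i) (Icc 0 1) (Icc δ (1 - δ)) :=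
    (hmaps i).mono_right Ioo_subset_Icc_self
  have hφC (i : ι) : φ i '' (h '' Icc δ (1 - δ)) ⊆ h '' Icc δ (1 - δ) := by
    rw [(hk i).image_image hCI]
    exact image_mono ((hmaps' i).mono_left hCI).image_subset
  choose ψ hψ hψφ hφψ hψ' using fun i =>
    exists_contDiff_inverse_of_dist_eq (n := 1) (F.ratio_mem i).1 (F.dist_eq i)
  obtain ⟨K, hK, hCK, hsub, hdisj, hKγ⟩ := F.exists_isCompact_core hc hi hk hδ.1 hmaps' hφψ
  set S := ∑ i, ρ i
  have hS : 0 < S := one_pos.trans hsum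
  have hprob : ∑ i, ρ i / S = 1 := by rw [← Finset.sum_div, div_self hS.ne']
  have habs (i : ι) : |(σ i (h 1) - σ i (h 0)) * (ρ i / S)| = S⁻¹ * ρ i := by
    rw [abs_mul, (hσ i).abs_sub, one_mul, abs_of_pos (div_pos (F.ratio_mem i).1 hS),
      div_eq_inv_mul]
  have hθ (i : ι) : S⁻¹ * ρ i ≤ S⁻¹ :=
    mul_le_of_le_one_right (inv_nonneg.2 hS.le) (F.ratio_mem i).2
  have hθ' (i : ι) (x : E) : S⁻¹ * ρ i * ‖fderiv ℝ (ψ i) x‖ ≤ S⁻¹ := by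
    rw [mul_assoc]
    exact mul_le_of_le_one_right (inv_nonneg.2 hS.le)
      ((le_inv_mul_iff₀ (F.ratio_mem i).1).1 ((hψ' i x).trans_eq (mul_one _).symm))
  obtain ⟨f, hf, hf', hfout⟩ := exists_contDiff_fderiv_eq_zero_of_blend hK hsub hdisj hψ hψφ
    (inv_nonneg.2 hS.le) (inv_lt_one_of_one_lt₀ hsum) (fun i => (habs i).trans_le (hθ i))
    (fun i x => (habs i).symm ▸ hθ' i x) (fun i => (hσ i).contDiff)
    (hcompact isCompact_Icc subset_rfl) (hcompact isCompact_Icc hCI).isClosed (image_mono hCI) hCK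
    hφC hKγ (fun i => (hσ i).fderiv_eq) (b := fun i => σ i (h 0)) (by
      rintro _ ⟨⟨t, ht, rfl⟩, htC⟩ i
      exact sum_transition_eq hσ hprob ⟨ht, fun h' => htC (mem_image_of_mem h h')⟩ i)
  exact ⟨f, hf, hf', fun x hx hxφ => hfout x fun i => hKγ i x ⟨hx, hxφ i⟩⟩

theorem SimilitudeSystem.exists_contDiff_of_notMem_image
    (F : SimilitudeSystem (h '' Icc 0 1) φ ρ) (hc : ContinuousOn h (Icc 0 1))
    (hi : InjOn h (Icc 0 1)) (hsum : 1 < ∑ i, ρ i) (h0 : ∀ i, h 0 ∉ φ i '' (h '' Icc 0 1))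
    (h1 : ∀ i, h 1 ∉ φ i '' (h '' Icc 0 1)) :
    ∃ f : E → ℝ, ContDiff ℝ 1 f ∧ (∀ x ∈ h '' Icc 0 1, fderiv ℝ f x = 0) ∧ f (h 0) ≠ f (h 1) := by
  obtain ⟨k, hk⟩ := F.exists_isArcLift hc hi
  obtain ⟨δ, hδ, hmaps⟩ :=
    exists_mapsTo_Ioo_of_mapsTo_Ioo hk fun i => (hk i).mapsTo_Ioo (h0 i) (h1 i)
  choose σ hσ using fun i => (hk i).exists_isTransition hδ hc hi (hmaps i)
  obtain ⟨f, hf, hf', hfout⟩ :=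
    F.exists_contDiff_eq_sum_transition hc hi hsum hk hδ hmaps hσ
  have hprob : ∑ i, ρ i / ∑ j, ρ j = 1 := by
    rw [← Finset.sum_div, div_self (one_pos.trans hsum).ne']
  have hf0 : f (h 0) = 0 := by
    rw [hfout (h 0) (mem_image_of_mem h (left_mem_Icc.2 zero_le_one)) h0]
    simp only [sub_self, mul_zero, Finset.sum_const_zero]
  have hf1 : f (h 1) = 1 := by
    rw [hfout (h 1) (mem_image_of_mem h (right_mem_Icc.2 zero_le_one)) h1]
    refine (Finset.sum_congr rfl fun i _ => ?_).trans hprob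
    linear_combination (ρ i / ∑ j, ρ j) * (hσ i).sq_sub
  exact ⟨f, hf, hf', hf0.trans_ne (zero_ne_one.trans_eq hf1.symm)⟩

end Arc

section Main

lemma sum_le_sum_filter_not_add_one {ι : Type*} {s : Finset ι} {ρ : ι → ℝ} (hρ : ∀ i, ρ i ≤ 1)
    {p : ι → Prop} [DecidablePred p] (hp : {i | p i}.Subsingleton) :
    ∑ i ∈ s, ρ i ≤ ∑ i ∈ s with ¬p i, ρ i + 1 := by
  have hcard : (s.filter p).card ≤ 1 := Finset.card_le_one.2 fun i hi j hj =>
    hp (Finset.mem_filter.1 hi).2 (Finset.mem_filter.1 hj).2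
  have hle : ∑ i ∈ s with p i, ρ i ≤ 1 :=
    calc ∑ i ∈ s with p i, ρ i ≤ (s.filter p).card • (1 : ℝ) :=
          Finset.sum_le_card_nsmul _ _ _ fun i _ => hρ i
      _ ≤ 1 := by rw [nsmul_one]; exact_mod_cast hcard
  rw [← Finset.sum_filter_not_add_sum_filter s p]
  exact add_le_add_right hle _

lemma SimilitudeSystem.exists_words_one_lt_sum {X ι : Type*} [MetricSpace X] [Fintype ι]
    {h : ℝ → X} {φ : ι → X → X} {ρ : ι → ℝ} (F : SimilitudeSystem (h '' Icc 0 1) φ ρ)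
    (hc : ContinuousOn h (Icc 0 1)) (hi : InjOn h (Icc 0 1)) (hsum : 1 < ∑ i, ρ i) :
    ∃ (n : ℕ) (J : Finset (Fin n → ι)), 1 < ∑ w ∈ J, ∏ j, ρ (w j) ∧
      ∀ w ∈ J, h 0 ∉ wordMap φ n w '' (h '' Icc 0 1) ∧ h 1 ∉ wordMap φ n w '' (h '' Icc 0 1) := by
  classical
  obtain ⟨n, hn⟩ := pow_unbounded_of_one_lt 3 hsum
  have G := F.words n
  obtain ⟨k, hk⟩ := G.exists_isArcLift hc hi
  refine ⟨n, Finset.univ.filter fun w => h 0 ∉ wordMap φ n w '' (h '' Icc 0 1) ∧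
    h 1 ∉ wordMap φ n w '' (h '' Icc 0 1), ?_, fun w hw => (Finset.mem_filter.1 hw).2⟩
  have hdrop {s : Finset (Fin n → ι)} {e : ℝ} (he : e = 0 ∨ e = 1) :=
    sum_le_sum_filter_not_add_one (s := s) (fun w => (G.ratio_mem w).2)
      (G.subsingleton_setOf_mem_image hi hk he)
  have h0 := hdrop (s := .univ) (Or.inl rfl)
  have h1 := hdrop (s := {w | h 0 ∉ wordMap φ n w '' (h '' Icc 0 1)}) (Or.inr rfl)
  rw [Finset.filter_filter] at h1
  rw [Fintype.sum_pow] at hn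
  linarith

theorem selfSimilarArc_isWhitneySet_general {E ι : Type*} [NormedAddCommGroup E]
    [NormedSpace ℝ E] [FiniteDimensional ℝ E] [StrictConvexSpace ℝ E] [Fintype ι] {h : ℝ → E}
    {φ : ι → E → E} {ρ : ι → ℝ} (hc : ContinuousOn h (Icc 0 1)) (hi : InjOn h (Icc 0 1))
    (F : SimilitudeSystem (h '' Icc 0 1) φ ρ) (hsum : 1 < ∑ i, ρ i) :
    ∃ f : E → ℝ, ContDiff ℝ 1 f ∧ (∀ x ∈ h '' Icc 0 1, fderiv ℝ f x = 0) ∧ f (h 0) ≠ f (h 1) := by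
  obtain ⟨n, J, hJ, hends⟩ := F.exists_words_one_lt_sum hc hi hsum
  exact ((F.words n).comp_injective Subtype.val_injective).exists_contDiff_of_notMem_image hc hi
    (hJ.trans_eq (Finset.sum_coe_sort J _).symm) (fun w => (hends w w.2).1)
    fun w => (hends w w.2).2

lemma pairwise_subsingleton_inter_of_adjacent {X : Type*} {N : ℕ} {s : Fin N → Set X}
    (hadj : ∀ i j : Fin N, (i : ℕ) + 1 = j → ∃ x, s i ∩ s j = {x})
    (hfar : ∀ i j : Fin N, (i : ℕ) + 1 < j → s i ∩ s j = ∅) :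
    Pairwise fun i j => (s i ∩ s j).Subsingleton := by
  have hlt (i j : Fin N) (hij : i < j) : (s i ∩ s j).Subsingleton := by
    obtain heq | hlt := (Nat.succ_le_of_lt hij).eq_or_lt
    · obtain ⟨x, hx⟩ := hadj i j heq
      exact hx ▸ subsingleton_singleton
    · exact hfar i j hlt ▸ subsingleton_empty
  intro i j hij
  obtain h | h := hij.lt_or_gt
  · exact hlt i j h
  · rw [inter_comm]
    exact hlt j i h

end Main

end

/-- Every self-similar arc of Hausdorff dimension > 1 is a Whitney set
(no open set condition assumed). -/
theorem selfSimilarArc_isWhitneySet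
    (d N : ℕ)
    (φ : Fin N → EuclideanSpace ℝ (Fin d) → EuclideanSpace ℝ (Fin d))
    (ρ : Fin N → ℝ) (hρ : ∀ i, ρ i ∈ Set.Ioo (0 : ℝ) 1)
    (hsim : ∀ i x y, dist (φ i x) (φ i y) = ρ i * dist x y)
    -- γ is the attractor of {φ_1, …, φ_N}
    (γ : Set (EuclideanSpace ℝ (Fin d)))
    (hγne : γ.Nonempty) (hγcomp : IsCompact γ)
    (hattr : γ = ⋃ i, φ i '' γ)
    -- γ is an arc
    (harc : IsArc γ)
    -- adjacent pieces meet in a single point, non-adjacent pieces are disjoint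
    (hadj : ∀ i j : Fin N, (i : ℕ) + 1 = (j : ℕ) →
      ∃ x, (φ i '' γ) ∩ (φ j '' γ) = {x})
    (hfar : ∀ i j : Fin N, (i : ℕ) + 1 < (j : ℕ) →
      (φ i '' γ) ∩ (φ j '' γ) = ∅)
    -- Hausdorff dimension > 1
    (hdim : 1 < dimH γ) :
    IsWhitneySet γ := by
  have hsum : 1 < ∑ i, ρ i := one_lt_sum_of_one_lt_dimH (fun i => Ioo_subset_Ico_self (hρ i))
    (fun i x y => (hsim i x y).le) hγcomp.isBounded hattr.subset hdim
  have F : SimilitudeSystem γ φ ρ :=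
    ⟨fun i => Ioo_subset_Ioc_self (hρ i), hsim,
      fun i => mapsTo_iff_image_subset.2 ((subset_iUnion _ i).trans hattr.superset),
      pairwise_subsingleton_inter_of_adjacent hadj hfar⟩
  obtain ⟨h, hc, hi, rfl⟩ := harc
  obtain ⟨f, hf, hf', hne⟩ := selfSimilarArc_isWhitneySet_general hc hi F hsum
  exact ⟨hγcomp, (isConnected_Icc zero_le_one).image h hc, f, hf, hf', fun hconst =>
    hne (hconst _ (mem_image_of_mem h (left_mem_Icc.2 zero_le_one)) _
      (mem_image_of_mem h (right_mem_Icc.2 zero_le_one)))⟩
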